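/- For every r ≥ 2, if (H_n) is a sequence of ordered r-matchings whose sizes satisfy |H_n| ≤ (1/(2r))·(n/log n)^(1/r), then the probability that RM_n^(r) contains a copy of H_n (that is, a subfamily N ⊆ RM_n^(r) of |H_n| edges such that the unique order-preserving bijection from the union of the edges of N onto [r·|H_n|] maps N onto H_n) tends to 1 as n → ∞. -/

import Mathlib

open Finset
open scoped Classical

/-- An ordered `r`-matching of size `n`: a partition of `[r*n] = {1,…,r*n}` into `n`
pairwise disjoint `r`-element subsets (the edges). -/
def IsOrderedMatching (r n : ℕ) (M : Finset (Finset ℕ)) : Prop :=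
  M.card = n ∧ (∀ e ∈ M, e.card = r) ∧
  (∀ e ∈ M, ∀ f ∈ M, e ≠ f → Disjoint e f) ∧
  M.biUnion id = Finset.Icc 1 (r * n)

/-- Two disjoint `r`-element sets `e`, `f` form the `r`-pattern `P`: the unique
order-preserving bijection from `e ∪ f` onto `[2r]` maps the pair `{e, f}` onto `P`. -/
def FormsPattern (r : ℕ) (e f : Finset ℕ) (P : Finset (Finset ℕ)) : Prop :=
  ∃ φ : ℕ → ℕ, StrictMonoOn φ ↑(e ∪ f) ∧
    (e ∪ f).image φ = Finset.Icc 1 (2 * r) ∧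
    ({e.image φ, f.image φ} : Finset (Finset ℕ)) = P

/-- A `Ps`-clique: a family of pairwise disjoint `r`-element subsets of `ℕ`, every two of
which form a pattern belonging to `Ps`. -/
def IsClique (r : ℕ) (Ps : Set (Finset (Finset ℕ))) (K : Finset (Finset ℕ)) : Prop :=
  (∀ e ∈ K, e.card = r) ∧ (∀ e ∈ K, ∀ f ∈ K, e ≠ f → Disjoint e f) ∧
  (∀ e ∈ K, ∀ f ∈ K, e ≠ f → ∃ P ∈ Ps, FormsPattern r e f P)

/-- `z_Ps(M)`: the maximum size of a subfamily of `M` that is a `Ps`-clique. -/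
noncomputable def zClique (r : ℕ) (Ps : Set (Finset (Finset ℕ))) (M : Finset (Finset ℕ)) : ℕ :=
  sSup {k | ∃ K : Finset (Finset ℕ), K ⊆ M ∧ IsClique r Ps K ∧ K.card = k}

/-- All ordered `r`-matchings of size `n` (as a finset). -/
noncomputable def matchingFamilies (r n : ℕ) : Finset (Finset (Finset ℕ)) :=
  ((Finset.Icc 1 (r * n)).powerset.powerset).filter (IsOrderedMatching r n)

/-- The probability of the event `A` for a uniformly random ordered `r`-matching of size `n`. -/
noncomputable def prob (r n : ℕ) (A : Finset (Finset ℕ) → Prop) : ℝ :=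
  (((matchingFamilies r n).filter A).card : ℝ) / ((matchingFamilies r n).card : ℝ)

/-- Expectation of `X` with respect to a uniformly random ordered `r`-matching of size `n`. -/
noncomputable def expect (r n : ℕ) (X : Finset (Finset ℕ) → ℝ) : ℝ :=
  (∑ M ∈ matchingFamilies r n, X M) / ((matchingFamilies r n).card : ℝ)

/-- An `r`-partite `r`-pattern: each edge contains exactly one of `{2i-1, 2i}` for each
`i = 1, …, r`. -/
def IsPartitePattern (r : ℕ) (P : Finset (Finset ℕ)) : Prop :=
  IsOrderedMatching r 2 P ∧
  ∀ e ∈ P, ∀ i ∈ Finset.Icc 1 r, (e ∩ {2 * i - 1, 2 * i}).card = 1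

/-- An `r`-pattern `P` is collectable if there exist arbitrarily large `{P}`-cliques. -/
def Collectable (r : ℕ) (P : Finset (Finset ℕ)) : Prop :=
  ∀ k : ℕ, ∃ K : Finset (Finset ℕ), IsClique r {P} K ∧ K.card = k

/-- The word of a pattern `P` over `{A=true, B=false}`: the `j`-th letter is `true` iff
vertex `j` lies in the edge of `P` containing `1`. -/
noncomputable def patternWord (r : ℕ) (P : Finset (Finset ℕ)) : List Bool :=
  (List.range (2 * r)).map (fun j => decide (∃ e ∈ P, 1 ∈ e ∧ j + 1 ∈ e))

/-- `lam` is a splitting of the word `w` into consecutive blocks of the form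
`A^t B^t` or `B^t A^t` with half-lengths given by `lam`. -/
def IsBlockSplitting (w : List Bool) (lam : List ℕ) : Prop :=
  (∀ t ∈ lam, 1 ≤ t) ∧
  ∃ bs : List Bool, bs.length = lam.length ∧
    w = (List.zipWith (fun t b => List.replicate t b ++ List.replicate t !b) lam bs).flatten

/-- The pattern `P` has composition `lam` (the sequence of half-lengths of the blocks of
its unique splitting). -/
def HasComposition (r : ℕ) (P : Finset (Finset ℕ)) (lam : List ℕ) : Prop :=
  IsBlockSplitting (patternWord r P) lam

/-- Two distinct collectable `r`-patterns are harmonious if they have the same composition. -/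
def Harmonious (r : ℕ) (P Q : Finset (Finset ℕ)) : Prop :=
  P ≠ Q ∧ Collectable r P ∧ Collectable r Q ∧
  ∃ lam : List ℕ, HasComposition r P lam ∧ HasComposition r Q lam

/-- A pair of distinct `r`-patterns is a mismatch if exactly one of them is collectable, or
both are collectable but their compositions differ. -/
def Mismatch (r : ℕ) (P Q : Finset (Finset ℕ)) : Prop :=
  P ≠ Q ∧
  ((Collectable r P ∧ ¬ Collectable r Q) ∨
   (¬ Collectable r P ∧ Collectable r Q) ∨
   (Collectable r P ∧ Collectable r Q ∧
     ¬ ∃ lam : List ℕ, HasComposition r P lam ∧ HasComposition r Q lam))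

/-- The trace of an ordered `r`-matching of size `k` on `[rk]`: the `j`-th letter equals
`i` when `j` is the `i`-th smallest element of the edge containing `j`. -/
noncomputable def trace (r k : ℕ) (M : Finset (Finset ℕ)) : List ℕ :=
  (List.range (r * k)).map (fun j₀ =>
    ((Finset.Icc 1 (r * k)).filter
      (fun x => x ≤ j₀ + 1 ∧ ∃ e ∈ M, j₀ + 1 ∈ e ∧ x ∈ e)).card)

/-- `a_Ps(k)`: the number of `Ps`-cliques of size `k` whose edges partition `[rk]`. -/
noncomputable def cliqueCount (r : ℕ) (Ps : Set (Finset (Finset ℕ))) (k : ℕ) : ℕ :=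
  (((Finset.Icc 1 (r * k)).powerset.powerset).filter
    (fun M => IsOrderedMatching r k M ∧ IsClique r Ps M)).card

/-- The maximum size of any `Ps`-clique whatsoever. -/
noncomputable def maxCliqueSize (r : ℕ) (Ps : Set (Finset (Finset ℕ))) : ℕ :=
  sSup {k | ∃ K : Finset (Finset ℕ), IsClique r Ps K ∧ K.card = k}

/-- `M` contains a copy of the ordered `r`-matching `H` of size `k`: a subfamily `N ⊆ M` of
`k` edges such that the order-preserving bijection from the union of the edges of `N`
onto `[rk]` maps `N` onto `H`. -/
def ContainsCopy (r k : ℕ) (H M : Finset (Finset ℕ)) : Prop :=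
  ∃ N ⊆ M, N.card = k ∧ ∃ φ : ℕ → ℕ,
    StrictMonoOn φ ↑(N.biUnion id) ∧
    (N.biUnion id).image φ = Finset.Icc 1 (r * k) ∧
    N.image (fun e => e.image φ) = H

/-- Delete the `j`-th smallest element of the finite set `e`. -/
def deleteJth (j : ℕ) (e : Finset ℕ) : Finset ℕ :=
  e.filter (fun x => (e.filter (· ≤ x)).card ≠ j)

/-- Relabel the elements of `e` order-preservingly by their ranks in `V`. -/
def relabel (V : Finset ℕ) (e : Finset ℕ) : Finset ℕ :=
  e.image (fun x => (V.filter (· ≤ x)).card)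

/-- `S^(−j)`: delete from each edge of the pattern `S` its `j`-th smallest element and
relabel the remaining vertices order-preservingly. -/
def patternDelete (j : ℕ) (S : Finset (Finset ℕ)) : Finset (Finset ℕ) :=
  (S.image (deleteJth j)).image (relabel ((S.image (deleteJth j)).biUnion id))

/-- All perfect `r`-matchings on the vertex set `V`. -/
noncomputable def matchingsOn (r : ℕ) (V : Finset ℕ) : Finset (Finset (Finset ℕ)) :=
  V.powerset.powerset.filter (fun M => (∀ e ∈ M, e.card = r) ∧
    (∀ e ∈ M, ∀ f ∈ M, e ≠ f → Disjoint e f) ∧ M.biUnion id = V)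

theorem mem_matchingsOn {r : ℕ} {V : Finset ℕ} {M : Finset (Finset ℕ)} :
    M ∈ matchingsOn r V ↔ (∀ e ∈ M, e.card = r) ∧
    (∀ e ∈ M, ∀ f ∈ M, e ≠ f → Disjoint e f) ∧ M.biUnion id = V := by
  unfold matchingsOn
  rw [mem_filter, and_iff_right_iff_imp]
  rintro ⟨_, _, h⟩
  rw [mem_powerset]
  intro e he
  rw [mem_powerset, ← h]
  exact subset_biUnion_of_mem id he

theorem matchingFamilies_eq (r n : ℕ) (hr : 0 < r) :
    matchingFamilies r n = matchingsOn r (Icc 1 (r * n)) := by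
  ext M
  have aux : (∀ e ∈ M, e.card = r) → (∀ e ∈ M, ∀ f ∈ M, e ≠ f → Disjoint e f) →
      M.biUnion id = Icc 1 (r * n) → M.card = n := by
    intro h1 h2 h3
    have h4 : (M.biUnion id).card = ∑ e ∈ M, (id e).card := card_biUnion h2
    simp only [id_eq] at h4
    rw [sum_congr rfl (fun e he => h1 e he), h3, sum_const, Nat.card_Icc] at h4
    simp only [smul_eq_mul, Nat.add_sub_cancel] at h4
    rw [mul_comm] at h4
    exact (Nat.eq_of_mul_eq_mul_right hr h4).symm
  unfold matchingFamilies matchingsOn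
  rw [mem_filter, mem_filter]
  unfold IsOrderedMatching
  constructor
  · rintro ⟨h, -, h2⟩
    exact ⟨h, h2⟩
  · rintro ⟨h, h1, h2, h3⟩
    exact ⟨h, aux h1 h2 h3, h1, h2, h3⟩

theorem card_rec (r' : ℕ) (V : Finset ℕ) (v : ℕ) (hv : v ∈ V)
    (P : Finset (Finset ℕ) → Prop) :
    ((matchingsOn (r' + 1) V).filter P).card =
      ∑ g ∈ powersetCard r' (V.erase v),
        ((matchingsOn (r' + 1) (V \ insert v g)).filter
          (fun M => P (insert (insert v g) M))).card := by
  rw [← card_sigma]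
  symm
  have key : ∀ g M, M ∈ matchingsOn (r' + 1) (V \ insert v g) → ∀ e ∈ M, v ∉ e := by
    intro g M hM e he hve
    rw [mem_matchingsOn] at hM
    have : v ∈ M.biUnion id := mem_biUnion.2 ⟨e, he, hve⟩
    rw [hM.2.2] at this
    simp at this
  apply card_bij (fun x _ => insert (insert v x.1) x.2)
  · rintro ⟨g, M⟩ hx
    simp only [mem_sigma, mem_powersetCard, mem_filter] at hx
    obtain ⟨⟨hg, hgc⟩, hM, hP⟩ := hx
    have hM' := mem_matchingsOn.1 hM
    have hvg : v ∉ g := fun h => by simpa using hg h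
    have hd : ∀ e ∈ M, Disjoint (insert v g) e := by
      intro e he
      have : e ⊆ V \ insert v g := by
        rw [← hM'.2.2]; exact subset_biUnion_of_mem id he
      exact (disjoint_of_subset_left this sdiff_disjoint).symm
    rw [mem_filter, mem_matchingsOn]
    refine ⟨⟨?_, ?_, ?_⟩, hP⟩
    · intro e he
      rcases mem_insert.1 he with rfl | he
      · rw [card_insert_of_notMem hvg, hgc]
      · exact hM'.1 e he
    · intro e he f hf hef
      rcases mem_insert.1 he with rfl | he <;> rcases mem_insert.1 hf with rfl | hf
      · exact absurd rfl hef
      · exact hd f hf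
      · exact (hd e he).symm
      · exact hM'.2.1 e he f hf hef
    · rw [biUnion_insert, hM'.2.2, id]
      apply union_sdiff_of_subset
      apply insert_subset hv
      exact hg.trans (erase_subset _ _)
  · rintro ⟨g, M⟩ hx ⟨g2, M2⟩ hx2 h
    simp only [mem_sigma, mem_powersetCard, mem_filter] at hx hx2 h
    have hvg : v ∉ g := fun h => by simpa using hx.1.1 h
    have hvg2 : v ∉ g2 := fun h => by simpa using hx2.1.1 h
    have h1 : insert v g ∈ insert (insert v g2) M2 := by
      rw [← h]; exact mem_insert_self _ _
    have hgg : g = g2 := by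
      rcases mem_insert.1 h1 with h1 | h1
      · rw [← erase_insert hvg, h1, erase_insert hvg2]
      · exact absurd (mem_insert_self v g) (key _ _ hx2.2.1 _ h1)
    subst hgg
    have n1 : insert v g ∉ M := fun h => key _ _ hx.2.1 _ h (mem_insert_self v g)
    have n2 : insert v g ∉ M2 := fun h => key _ _ hx2.2.1 _ h (mem_insert_self v g)
    have : M = M2 := by rw [← erase_insert n1, h, erase_insert n2]
    subst this
    rfl
  · intro M hM
    rw [mem_filter] at hM
    obtain ⟨hM, hP⟩ := hM
    obtain ⟨h1, h2, h3⟩ := mem_matchingsOn.1 hM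
    have hv' := hv
    rw [← h3] at hv'
    obtain ⟨e, he, hve⟩ := mem_biUnion.1 hv'
    simp only [id] at hve
    have heV : e ⊆ V := by rw [← h3]; exact subset_biUnion_of_mem id he
    refine ⟨⟨e.erase v, M.erase e⟩, ?_, ?_⟩
    · simp only [mem_sigma, mem_powersetCard, mem_filter]
      rw [insert_erase hve, insert_erase he]
      refine ⟨⟨erase_subset_erase v heV, ?_⟩, ?_, hP⟩
      · rw [card_erase_of_mem hve, h1 e he]; rfl
      · rw [mem_matchingsOn]
        refine ⟨fun f hf => h1 f (mem_of_mem_erase hf), fun f hf g hg =>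
          h2 f (mem_of_mem_erase hf) g (mem_of_mem_erase hg), ?_⟩
        ext x
        simp only [mem_biUnion, id, mem_sdiff, mem_erase]
        constructor
        · rintro ⟨f, ⟨hfe, hf⟩, hx⟩
          refine ⟨?_, fun hxe => ?_⟩
          · rw [← h3]; exact mem_biUnion.2 ⟨f, hf, hx⟩
          · exact disjoint_left.1 (h2 f hf e he hfe) hx hxe
        · rintro ⟨hx, hxe⟩
          rw [← h3] at hx
          obtain ⟨f, hf, hxf⟩ := mem_biUnion.1 hx
          refine ⟨f, ⟨?_, hf⟩, hxf⟩
          rintro rfl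
          exact hxe hxf
    · simp only
      rw [insert_erase hve, insert_erase he]

theorem card_rec' (r' : ℕ) (V : Finset ℕ) (v : ℕ) (hv : v ∈ V) :
    (matchingsOn (r' + 1) V).card =
      ∑ g ∈ powersetCard r' (V.erase v), (matchingsOn (r' + 1) (V \ insert v g)).card := by
  have := card_rec r' V v hv (fun _ => True)
  simpa using this

theorem card_sdiff_edge {r' : ℕ} {V : Finset ℕ} {v : ℕ} (hv : v ∈ V) {g : Finset ℕ}
    (hg : g ∈ powersetCard r' (V.erase v)) : (V \ insert v g).card = V.card - (r' + 1) := by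
  rw [mem_powersetCard] at hg
  have hvg : v ∉ g := fun h => by simpa using hg.1 h
  rw [card_sdiff_of_subset, card_insert_of_notMem hvg, hg.2]
  exact insert_subset hv (hg.1.trans (erase_subset _ _))

theorem card_matchingsOn_congr (r' : ℕ) : ∀ (N : ℕ) (V W : Finset ℕ), V.card = N → W.card = N →
    (matchingsOn (r' + 1) V).card = (matchingsOn (r' + 1) W).card := by
  intro N
  induction N using Nat.strong_induction_on with
  | _ N ih =>
    intro V W hV hW
    rcases V.eq_empty_or_nonempty with rfl | ⟨v, hv⟩
    · have : W = ∅ := by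
        rw [← card_eq_zero, hW, ← hV, card_empty]
      rw [this]
    · have hN : 0 < N := by rw [← hV]; exact card_pos.2 ⟨v, hv⟩
      obtain ⟨w, hw⟩ : W.Nonempty := by rw [← card_pos, hW]; exact hN
      have hlt : N - (r' + 1) < N := by omega
      by_cases hne : (powersetCard r' (V.erase v)).Nonempty
      · obtain ⟨g0, hg0⟩ := hne
        rw [card_rec' r' V v hv, card_rec' r' W w hw]
        rw [sum_congr rfl (g := fun _ => (matchingsOn (r' + 1) (V \ insert v g0)).card),
          sum_congr (s₁ := powersetCard r' (W.erase w)) rfl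
            (g := fun _ => (matchingsOn (r' + 1) (V \ insert v g0)).card)]
        · rw [sum_const, sum_const, card_powersetCard, card_powersetCard, card_erase_of_mem hv,
            card_erase_of_mem hw, hV, hW]
        · intro g hg
          exact ih _ hlt _ _ (by rw [card_sdiff_edge hw hg, hW])
            (by rw [card_sdiff_edge hv hg0, hV])
        · intro g hg
          exact ih _ hlt _ _ (by rw [card_sdiff_edge hv hg, hV])
            (by rw [card_sdiff_edge hv hg0, hV])
      · rw [not_nonempty_iff_eq_empty] at hne
        have hne2 : powersetCard r' (W.erase w) = ∅ := by
          rw [← card_eq_zero, card_powersetCard, card_erase_of_mem hw, hW, ← hV,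
            ← card_erase_of_mem hv, ← card_powersetCard, hne, card_empty]
        rw [card_rec' r' V v hv, card_rec' r' W w hw, hne, hne2]
        simp

theorem card_matchingsOn_pos (r' : ℕ) : ∀ (n : ℕ) (V : Finset ℕ), V.card = (r' + 1) * n →
    0 < (matchingsOn (r' + 1) V).card := by
  intro n
  induction n with
  | zero =>
    intro V hV
    have : V = ∅ := by simpa using hV
    subst this
    refine card_pos.2 ⟨∅, ?_⟩
    rw [mem_matchingsOn]
    simp
  | succ n ih =>
    intro V hV
    have hV' : V.card = (r' + 1) * n + (r' + 1) := by rw [hV]; ring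
    obtain ⟨v, hv⟩ : V.Nonempty := by rw [← card_pos]; omega
    rw [card_rec' r' V v hv]
    apply sum_pos
    · intro g hg
      apply ih
      rw [card_sdiff_edge hv hg]; omega
    · rw [powersetCard_nonempty, card_erase_of_mem hv]
      have := Nat.zero_le ((r' + 1) * n)
      omega

theorem good_count (r' s : ℕ) (φ : ℕ → ℕ) (h : Finset ℕ) (hc : h.card = r' + 1) (V : Finset ℕ)
    (v : ℕ) (hvh : φ v ∈ h)
    (hB : ∀ i ∈ h, s ≤ (V.filter (fun x => φ x = i)).card) :
    s ^ r' ≤ ((powersetCard r' (V.erase v)).filter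
      (fun g => h ⊆ (insert v g).image φ)).card := by
  have hc' : (h.erase (φ v)).card = r' := by rw [card_erase_of_mem hvh, hc]; rfl
  have h1 : s ^ r' ≤ (Fintype.piFinset
      (fun i : ↥(h.erase (φ v)) => V.filter (fun x => φ x = i))).card := by
    rw [Fintype.card_piFinset]
    calc s ^ r' = ∏ i : ↥(h.erase (φ v)), s := by
          rw [prod_const, card_univ, Fintype.card_coe, hc']
      _ ≤ _ := prod_le_prod' (fun i _ => hB i (mem_of_mem_erase i.2))
  refine h1.trans (card_le_card_of_injOn (fun f => univ.image f) ?_ ?_)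
  · intro f hf
    have hf' := Fintype.mem_piFinset.1 (mem_coe.1 hf)
    have hfv : ∀ i, φ (f i) = i := fun i => (mem_filter.1 (hf' i)).2
    have hfV : ∀ i, f i ∈ V := fun i => (mem_filter.1 (hf' i)).1
    have hinj : Function.Injective f := by
      intro i j hij
      apply Subtype.ext
      rw [← hfv i, ← hfv j, hij]
    rw [mem_coe, mem_filter, mem_powersetCard]
    refine ⟨⟨?_, ?_⟩, ?_⟩
    · intro x hx
      obtain ⟨i, -, rfl⟩ := mem_image.1 hx
      rw [mem_erase]
      refine ⟨?_, hfV i⟩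
      intro he
      have := (mem_erase.1 i.2).1
      rw [← hfv i, he] at this
      exact this rfl
    · rw [card_image_of_injective _ hinj, card_univ, Fintype.card_coe, hc']
    · intro i hi
      rw [mem_image]
      by_cases hiv : i = φ v
      · exact ⟨v, mem_insert_self _ _, hiv.symm⟩
      · refine ⟨f ⟨i, mem_erase.2 ⟨hiv, hi⟩⟩, ?_, hfv _⟩
        exact mem_insert_of_mem (mem_image_of_mem _ (mem_univ _))
  · intro f hf f2 hf2 hff
    have hf' := Fintype.mem_piFinset.1 (mem_coe.1 hf)
    have hf2' := Fintype.mem_piFinset.1 (mem_coe.1 hf2)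
    have hfv : ∀ i, φ (f i) = i := fun i => (mem_filter.1 (hf' i)).2
    have hfv2 : ∀ i, φ (f2 i) = i := fun i => (mem_filter.1 (hf2' i)).2
    funext i
    have : f i ∈ univ.image f2 := by
      simp only at hff
      rw [← hff]; exact mem_image_of_mem _ (mem_univ _)
    obtain ⟨j, -, hj⟩ := mem_image.1 this
    have hij : j = i := by
      apply Subtype.ext
      rw [← hfv i, ← hfv2 j, hj]
    rw [← hj, hij]

theorem bad_count (r' s D : ℕ) (φ : ℕ → ℕ) (h : Finset ℕ) (hc : h.card = r' + 1) (hD : 0 < D)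
    (hsD : s ≤ D) : ∀ (t : ℕ) (V : Finset ℕ), V.card ≤ D →
    (∀ i ∈ h, s + (r' + 1) * t ≤ (V.filter (fun x => φ x = i)).card) →
    (((matchingsOn (r' + 1) V).filter (fun M => ∀ e ∈ M, ¬ h ⊆ e.image φ)).card : ℝ) ≤
      (1 - (s : ℝ) ^ r' / (D : ℝ) ^ r') ^ t * ((matchingsOn (r' + 1) V).card : ℝ) := by
  intro t
  have hDr : (0 : ℝ) < (D : ℝ) ^ r' := by positivity
  have hq : (0 : ℝ) ≤ 1 - (s : ℝ) ^ r' / (D : ℝ) ^ r' := by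
    rw [sub_nonneg, div_le_one hDr]
    gcongr
  induction t with
  | zero =>
    intro V _ _
    simp only [pow_zero, one_mul, Nat.cast_le]
    exact card_filter_le _ _
  | succ t ih =>
    intro V hV hB
    obtain ⟨i0, hi0⟩ : h.Nonempty := by rw [← card_pos]; omega
    obtain ⟨v, hv⟩ : (V.filter (fun x => φ x = i0)).Nonempty := by
      rw [← card_pos]
      refine lt_of_lt_of_le ?_ (hB i0 hi0)
      positivity
    rw [mem_filter] at hv
    obtain ⟨hvV, rfl⟩ := hv
    set q : ℝ := 1 - (s : ℝ) ^ r' / (D : ℝ) ^ r' with hqdef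
    set S := powersetCard r' (V.erase v) with hS
    set G := S.filter (fun g => h ⊆ (insert v g).image φ) with hG
    have hGc : s ^ r' ≤ G.card := good_count r' s φ h hc V v hi0
      (fun i hi => le_trans (Nat.le_add_right _ _) (hB i hi))
    have hSc : S.card ≤ D ^ r' := by
      rw [hS, card_powersetCard, card_erase_of_mem hvV]
      refine (Nat.choose_le_pow _ _).trans ?_
      apply Nat.pow_le_pow_left
      omega
    obtain ⟨τ, hτ⟩ : ∃ τ : ℕ, ∀ g ∈ S, (matchingsOn (r' + 1) (V \ insert v g)).card = τ := by
      rcases S.eq_empty_or_nonempty with he | ⟨g0, hg0⟩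
      · exact ⟨0, by simp [he]⟩
      · refine ⟨_, fun g hg => card_matchingsOn_congr r' (V.card - (r' + 1)) _ (V \ insert v g0)
          (card_sdiff_edge hvV hg) (card_sdiff_edge hvV hg0)⟩
    have hT : (matchingsOn (r' + 1) V).card = S.card * τ := by
      rw [card_rec' r' V v hvV, sum_congr rfl hτ, sum_const, smul_eq_mul]
    have hrec : ((matchingsOn (r' + 1) V).filter (fun M => ∀ e ∈ M, ¬ h ⊆ e.image φ)).card =
        ∑ g ∈ S, ((matchingsOn (r' + 1) (V \ insert v g)).filter
          (fun M => ∀ e ∈ insert (insert v g) M, ¬ h ⊆ e.image φ)).card := by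
      convert card_rec r' V v hvV (fun M => ∀ e ∈ M, ¬ h ⊆ e.image φ)
    rw [hrec, hT]
    push_cast
    have hterm : ∀ g ∈ S, (((matchingsOn (r' + 1) (V \ insert v g)).filter
          (fun M => ∀ e ∈ insert (insert v g) M, ¬ h ⊆ e.image φ)).card : ℝ) ≤
        if h ⊆ (insert v g).image φ then 0 else q ^ t * τ := by
      intro g hg
      split_ifs with hgood
      · rw [filter_false_of_mem]
        · simp
        · intro M _ hcon
          exact hcon _ (mem_insert_self _ _) hgood
      · have hsub : (matchingsOn (r' + 1) (V \ insert v g)).filter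
          (fun M => ∀ e ∈ insert (insert v g) M, ¬ h ⊆ e.image φ) ⊆
            (matchingsOn (r' + 1) (V \ insert v g)).filter
          (fun M => ∀ e ∈ M, ¬ h ⊆ e.image φ) := by
          intro M hM
          rw [mem_filter] at hM ⊢
          exact ⟨hM.1, fun e he => hM.2 e (mem_insert_of_mem he)⟩
        refine (Nat.cast_le.2 (card_le_card hsub)).trans ?_
        rw [← hτ g hg]
        apply ih
        · exact (card_le_card sdiff_subset).trans hV
        · intro i hi
          have h1 := hB i hi
          have h2 : (V.filter (fun x => φ x = i)) ⊆
              ((V \ insert v g).filter (fun x => φ x = i)) ∪ insert v g := by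
            intro x hx
            rw [mem_filter] at hx
            rw [mem_union, mem_filter, mem_sdiff]
            by_cases hxg : x ∈ insert v g
            · exact Or.inr hxg
            · exact Or.inl ⟨⟨hx.1, hxg⟩, hx.2⟩
          have h3 := (card_le_card h2).trans (card_union_le _ _)
          have h4 := card_insert_le v g
          rw [(mem_powersetCard.1 hg).2] at h4
          have h5 : (r' + 1) * (t + 1) = (r' + 1) * t + (r' + 1) := by ring
          omega
    refine (sum_le_sum hterm).trans ?_
    rw [sum_ite, sum_const_zero, zero_add, sum_const, nsmul_eq_mul]
    have hcardadd := card_filter_add_card_filter_not (s := S)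
      (fun g => h ⊆ (insert v g).image φ)
    rw [← hG] at hcardadd
    set Bd := S.filter (fun g => ¬ h ⊆ (insert v g).image φ) with hBd
    have hcr : (G.card : ℝ) + (Bd.card : ℝ) = S.card := by exact_mod_cast hcardadd
    have hkey : (Bd.card : ℝ) ≤ q * S.card := by
      have hGc' : (s : ℝ) ^ r' ≤ G.card := by exact_mod_cast hGc
      have hSc' : (S.card : ℝ) ≤ (D : ℝ) ^ r' := by exact_mod_cast hSc
      have : (s : ℝ) ^ r' / (D : ℝ) ^ r' * S.card ≤ (s : ℝ) ^ r' := by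
        rw [div_mul_eq_mul_div, div_le_iff₀ hDr]
        gcongr
      rw [hqdef]
      linarith
    calc (Bd.card : ℝ) * (q ^ t * τ) ≤ (q * S.card) * (q ^ t * τ) := by gcongr
      _ = q ^ (t + 1) * (S.card * τ) := by ring

theorem containsCopy_of_good (r k n L : ℕ) (H M : Finset (Finset ℕ)) (hr : 0 < r)
    (hH : IsOrderedMatching r k H)
    (hM : M ∈ matchingsOn r (Icc 1 (r * n)))
    (hgood : ∀ h ∈ H, ∃ e ∈ M, h ⊆ e.image (fun x => (x + L - 1) / L)) :
    ContainsCopy r k H M := by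
  obtain ⟨hHk, hHr, hHd, hHu⟩ := hH
  obtain ⟨hMr, hMd, hMu⟩ := mem_matchingsOn.1 hM
  set φ : ℕ → ℕ := fun x => (x + L - 1) / L with hφ
  have hmono : Monotone φ := by
    intro x y hxy
    exact Nat.div_le_div_right (by omega)
  choose! ψ hψM hψ using hgood
  have himg : ∀ h ∈ H, (ψ h).image φ = h := by
    intro h hh
    symm
    apply eq_of_subset_of_card_le (hψ h hh)
    rw [hHr h hh, ← hMr _ (hψM h hh)]
    exact card_image_le
  have hinj1 : ∀ h ∈ H, Set.InjOn φ (ψ h) := by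
    intro h hh
    apply card_image_iff.1
    rw [himg h hh, hHr h hh, hMr _ (hψM h hh)]
  have hψinj : Set.InjOn ψ H := by
    intro a ha b hb hab
    rw [← himg a ha, ← himg b hb, hab]
  refine ⟨H.image ψ, ?_, ?_, φ, ?_, ?_, ?_⟩
  · intro e he
    obtain ⟨h, hh, rfl⟩ := mem_image.1 he
    exact hψM h hh
  · rw [card_image_of_injOn hψinj, hHk]
  · apply hmono.monotoneOn _ |>.strictMonoOn_of_injOn
    intro x hx y hy hxy
    simp only [coe_biUnion, Set.mem_iUnion, mem_coe, mem_image, id] at hx hy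
    obtain ⟨e, ⟨a, ha, rfl⟩, hxa⟩ := hx
    obtain ⟨f, ⟨b, hb, rfl⟩, hyb⟩ := hy
    have h1 : φ x ∈ a := by rw [← himg a ha]; exact mem_image_of_mem _ hxa
    have h2 : φ x ∈ b := by rw [hxy, ← himg b hb]; exact mem_image_of_mem _ hyb
    have hab : a = b := by
      by_contra hne
      exact disjoint_left.1 (hHd a ha b hb hne) h1 h2
    subst hab
    exact hinj1 a ha hxa hyb hxy
  · rw [← hHu, image_biUnion, biUnion_image]
    ext x
    simp only [mem_biUnion, id]
    constructor
    · rintro ⟨a, ha, hx⟩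
      rw [himg a ha] at hx
      exact ⟨a, ha, hx⟩
    · rintro ⟨a, ha, hx⟩
      refine ⟨a, ha, ?_⟩
      rw [himg a ha]
      exact hx
  · rw [image_image]
    ext x
    simp only [mem_image, Function.comp]
    constructor
    · rintro ⟨a, ha, rfl⟩
      rw [himg a ha]; exact ha
    · intro hx
      exact ⟨x, hx, himg x hx⟩

theorem prob_ge (r' k n s t : ℕ) (H : Finset (Finset ℕ)) (hn : 0 < n)
    (hH : IsOrderedMatching (r' + 1) k H) (hst : s + (r' + 1) * t ≤ n / k) :
    1 - (k : ℝ) * (1 - (s : ℝ) ^ r' / (((r' + 1) * n : ℕ) : ℝ) ^ r') ^ t ≤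
      prob (r' + 1) n (ContainsCopy (r' + 1) k H) := by
  unfold prob
  rw [matchingFamilies_eq _ _ (Nat.succ_pos r')]
  set V := Icc 1 ((r' + 1) * n) with hV
  set D := (r' + 1) * n with hD
  have hVc : V.card = D := by simp [hV]
  have hTpos : (0 : ℝ) < (matchingsOn (r' + 1) V).card := by
    exact_mod_cast card_matchingsOn_pos r' n V (by rw [hVc])
  set L := n / k with hL
  set φ : ℕ → ℕ := fun x => (x + L - 1) / L with hφ
  set q : ℝ := 1 - (s : ℝ) ^ r' / (D : ℝ) ^ r' with hq
  have hbad : ∀ h ∈ H, (((matchingsOn (r' + 1) V).filter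
      (fun M => ∀ e ∈ M, ¬ h ⊆ e.image φ)).card : ℝ) ≤
      q ^ t * ((matchingsOn (r' + 1) V).card : ℝ) := by
    intro h hh
    apply bad_count r' s D φ h (hH.2.1 h hh)
    · positivity
    · calc s ≤ n / k := (Nat.le_add_right _ _).trans hst
        _ ≤ n := Nat.div_le_self _ _
        _ ≤ D := by rw [hD]; nlinarith
    · exact hVc.le
    · intro i hi
      refine hst.trans ?_
      have hi' : i ∈ Icc 1 ((r' + 1) * k) := by
        rw [← hH.2.2.2]; exact mem_biUnion.2 ⟨h, hh, hi⟩
      rw [mem_Icc] at hi'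
      rcases Nat.eq_zero_or_pos L with h0 | hLpos
      · omega
      obtain ⟨j, rfl⟩ : ∃ j, i = j + 1 := ⟨i - 1, by omega⟩
      have hsub : Ioc (j * L) (j * L + L) ⊆ V.filter (fun x => φ x = j + 1) := by
        intro x hx
        rw [mem_Ioc] at hx
        rw [mem_filter, hV, mem_Icc]
        refine ⟨⟨by omega, ?_⟩, ?_⟩
        · calc x ≤ j * L + L := hx.2
            _ = (j + 1) * L := by ring
            _ ≤ ((r' + 1) * k) * L := Nat.mul_le_mul_right _ hi'.2
            _ = (r' + 1) * (k * L) := by ring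
            _ ≤ (r' + 1) * n := Nat.mul_le_mul_left _ (Nat.mul_div_le n k)
        · have h5 : (j + 1) * L = j * L + L := by ring
          have h6 : (j + 2) * L = j * L + L + L := by ring
          show (x + L - 1) / L = j + 1
          rw [Nat.div_eq_iff hLpos]
          omega
      have := card_le_card hsub
      rw [Nat.card_Ioc] at this
      omega
  have hcover : matchingsOn (r' + 1) V ⊆
      ((matchingsOn (r' + 1) V).filter (ContainsCopy (r' + 1) k H)) ∪
      H.biUnion (fun h => (matchingsOn (r' + 1) V).filter
        (fun M => ∀ e ∈ M, ¬ h ⊆ e.image φ)) := by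
    intro M hM
    rw [mem_union, mem_filter, mem_biUnion]
    by_cases hg : ∀ h ∈ H, ∃ e ∈ M, h ⊆ e.image φ
    · exact Or.inl ⟨hM, containsCopy_of_good _ k n L H M (Nat.succ_pos _) hH hM hg⟩
    · push Not at hg
      obtain ⟨h, hh, hb⟩ := hg
      exact Or.inr ⟨h, hh, mem_filter.2 ⟨hM, hb⟩⟩
  have h1 := (card_le_card hcover).trans (card_union_le _ _)
  have h2 := h1.trans (Nat.add_le_add_left card_biUnion_le _)
  have h3 : ((matchingsOn (r' + 1) V).card : ℝ) ≤
      (((matchingsOn (r' + 1) V).filter (ContainsCopy (r' + 1) k H)).card : ℝ) +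
      ∑ h ∈ H, (((matchingsOn (r' + 1) V).filter
        (fun M => ∀ e ∈ M, ¬ h ⊆ e.image φ)).card : ℝ) := by exact_mod_cast h2
  have h4 := sum_le_sum hbad
  rw [sum_const, hH.1, nsmul_eq_mul] at h4
  rw [le_div_iff₀ hTpos]
  linarith

theorem prob_le_one (r n : ℕ) (A : Finset (Finset ℕ) → Prop) : prob r n A ≤ 1 := by
  unfold prob
  apply div_le_one_of_le₀
  · exact_mod_cast card_filter_le _ _
  · positivity

theorem exponent_bound (r' n k : ℕ) (hr' : 1 ≤ r') (hk : 0 < k) (hn : 3 ≤ n)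
    (hA : Real.log n * (2 * ((r' : ℝ) + 1) * k) ^ (r' + 1) ≤ n)
    (hx : 4 * ((r' : ℝ) + 1) * (1 + ((r' : ℝ) + 1) ^ 2) ≤ (n : ℝ) / k) :
    ∃ s t : ℕ, s + (r' + 1) * t ≤ n / k ∧ s ≤ (r' + 1) * n ∧
      3 / 2 * Real.log n / ((r' : ℝ) + 1) ≤
        (s : ℝ) ^ r' / (((r' + 1) * n : ℕ) : ℝ) ^ r' * t := by
  set L := n / k with hL
  set t := L / (r' + 1) ^ 2 with ht
  have hrt : (r' + 1) * t ≤ L := by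
    calc (r' + 1) * t ≤ (r' + 1) ^ 2 * t := by
          apply Nat.mul_le_mul_right
          nlinarith
      _ ≤ L := Nat.mul_div_le _ _
  refine ⟨L - (r' + 1) * t, t, by omega, ?_, ?_⟩
  · calc L - (r' + 1) * t ≤ L := Nat.sub_le _ _
      _ ≤ n := Nat.div_le_self _ _
      _ ≤ _ := by nlinarith
  have hnpos : (0 : ℝ) < n := by positivity
  have hkpos : (0 : ℝ) < k := by positivity
  set r : ℝ := (r' : ℝ) + 1 with hrdef
  have hr'1 : (1 : ℝ) ≤ r' := by exact_mod_cast hr'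
  have hr2 : 2 ≤ r := by linarith
  have hℓ : 0 ≤ Real.log n := Real.log_natCast_nonneg n
  set ℓ := Real.log n
  set x : ℝ := (n : ℝ) / k with hxdef
  have hxpos : 0 < x := by positivity
  set y : ℝ := x - (1 + r ^ 2) with hy
  have hLx : x - 1 ≤ L := by
    have := Nat.lt_div_mul_add (a := n) hk
    have h2 : (n : ℝ) ≤ L * k + k := by exact_mod_cast this.le
    have h3 : x ≤ L + 1 := by
      rw [hxdef, div_le_iff₀ hkpos]; linarith
    linarith
  have htL : (L : ℝ) ≤ r ^ 2 * t + r ^ 2 := by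
    have := Nat.lt_div_mul_add (a := L) (b := (r' + 1) ^ 2) (by positivity)
    have h2 : (L : ℝ) ≤ t * ((r' : ℝ) + 1) ^ 2 + ((r' : ℝ) + 1) ^ 2 := by exact_mod_cast this.le
    linarith
  have htL2 : r ^ 2 * t ≤ (L : ℝ) := by
    have := Nat.mul_div_le L ((r' + 1) ^ 2)
    rw [← ht] at this
    rw [hrdef]
    exact_mod_cast this
  have hypos : 0 ≤ y := by nlinarith
  have hyt : y / r ^ 2 ≤ t := by
    rw [div_le_iff₀ (by positivity)]
    linarith
  have hys : y * (r' / r) ≤ ((L - (r' + 1) * t : ℕ) : ℝ) := by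
    rw [Nat.cast_sub hrt]
    push_cast
    rw [← hrdef]
    have h1 : r * t ≤ L / r := by
      rw [le_div_iff₀ (by positivity)]
      linarith
    have h2 : (L : ℝ) * (r' / r) = L - L / r := by
      have : (r' : ℝ) = r - 1 := by rw [hrdef]; ring
      rw [this]
      field_simp
    have h3 : y * (r' / r) ≤ L * (r' / r) := by
      gcongr
      nlinarith
    linarith
  have hyx : 3 / 4 * x ^ (r' + 1) ≤ y ^ (r' + 1) := by
    have h1 : y = x * (1 + -((1 + r ^ 2) / x)) := by
      field_simp
      rw [hy]; ring
    have hu : r * ((1 + r ^ 2) / x) ≤ 1 / 4 := by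
      rw [← mul_div_assoc, div_le_iff₀ hxpos]
      linarith
    have hu0 : 0 ≤ (1 + r ^ 2) / x := by positivity
    have h2 := one_add_mul_le_pow (a := -((1 + r ^ 2) / x)) (by nlinarith) (r' + 1)
    push_cast at h2
    rw [← hrdef] at h2
    rw [h1, mul_pow, mul_comm]
    gcongr
    linarith
  have hxA : ℓ * (2 * r) ^ (r' + 1) * n ^ r' ≤ x ^ (r' + 1) := by
    rw [hxdef, div_pow, le_div_iff₀ (by positivity)]
    calc ℓ * (2 * r) ^ (r' + 1) * n ^ r' * k ^ (r' + 1)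
        = (ℓ * (2 * r * k) ^ (r' + 1)) * n ^ r' := by rw [mul_pow (2 * r)]; ring
      _ ≤ n * n ^ r' := by gcongr
      _ = n ^ (r' + 1) := by ring
  push_cast
  rw [← hrdef]
  have hone : (1 : ℝ) ≤ (2 * (r' / r)) ^ r' := by
    apply one_le_pow₀
    rw [← mul_div_assoc, le_div_iff₀ (by positivity)]
    linarith
  calc 3 / 2 * ℓ / r = 3 / 2 * ℓ / r * 1 := by ring
    _ ≤ 3 / 2 * ℓ / r * (2 * (r' / r)) ^ r' := by gcongr
    _ = (3 / 4 * (ℓ * (2 * r) ^ (r' + 1) * n ^ r')) * (r' / r) ^ r' / (r * n) ^ r' / r ^ 2 := by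
        rw [mul_pow, mul_pow, mul_pow]
        field_simp
        ring
    _ ≤ (3 / 4 * x ^ (r' + 1)) * (r' / r) ^ r' / (r * n) ^ r' / r ^ 2 := by gcongr
    _ ≤ y ^ (r' + 1) * (r' / r) ^ r' / (r * n) ^ r' / r ^ 2 := by gcongr
    _ = (y * (r' / r)) ^ r' / (r * n) ^ r' * (y / r ^ 2) := by
        rw [mul_pow y]
        ring
    _ ≤ _ := by gcongr

theorem final_bound (r' n k : ℕ) (H : Finset (Finset ℕ)) (hr' : 1 ≤ r') (hn : 3 ≤ n)
    (hH : IsOrderedMatching (r' + 1) k H)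
    (hA : Real.log n * (2 * ((r' : ℝ) + 1) * k) ^ (r' + 1) ≤ n)
    (hbig : (4 * ((r' : ℝ) + 1) * (1 + ((r' : ℝ) + 1) ^ 2)) ^ 2 ≤ n) :
    1 - Real.exp (-(Real.log n / (2 * ((r' : ℝ) + 1)))) ≤
      prob (r' + 1) n (ContainsCopy (r' + 1) k H) := by
  rcases Nat.eq_zero_or_pos k with rfl | hk
  · have := prob_ge r' 0 n 0 0 H (by omega) hH (by simp)
    simp only [Nat.cast_zero, zero_mul, sub_zero] at this
    have h2 := Real.exp_pos (-(Real.log n / (2 * ((r' : ℝ) + 1))))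
    linarith
  have hkpos : (0 : ℝ) < k := by positivity
  have hk1 : (1 : ℝ) ≤ k := by exact_mod_cast hk
  have hnpos : (0 : ℝ) < n := by positivity
  have hlog1 : 1 ≤ Real.log n := by
    rw [Real.le_log_iff_exp_le hnpos]
    have h3 : (3 : ℝ) ≤ n := by exact_mod_cast hn
    have := Real.exp_one_lt_d9
    linarith
  have hkr : (k : ℝ) ^ (r' + 1) ≤ n := by
    refine le_trans ?_ hA
    have h1 : (k : ℝ) ^ (r' + 1) ≤ (2 * ((r' : ℝ) + 1) * k) ^ (r' + 1) := by
      gcongr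
      have : (0 : ℝ) ≤ r' := by positivity
      nlinarith
    have h2 : (0 : ℝ) ≤ (2 * ((r' : ℝ) + 1) * k) ^ (r' + 1) := by positivity
    nlinarith
  have hk2 : (k : ℝ) ^ 2 ≤ n := le_trans (pow_le_pow_right₀ hk1 (by omega)) hkr
  have hx : 4 * ((r' : ℝ) + 1) * (1 + ((r' : ℝ) + 1) ^ 2) ≤ (n : ℝ) / k := by
    refine (abs_le_of_sq_le_sq' ?_ (by positivity)).2
    refine hbig.trans ?_
    rw [div_pow, le_div_iff₀ (by positivity), sq (n : ℝ)]
    gcongr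
  obtain ⟨s, t, hst, hsD, hexp⟩ := exponent_bound r' n k hr' hk hn hA hx
  have hP := prob_ge r' k n s t H (by omega) hH hst
  set p : ℝ := (s : ℝ) ^ r' / (((r' + 1) * n : ℕ) : ℝ) ^ r' with hp
  have hDpos : (0 : ℝ) < (((r' + 1) * n : ℕ) : ℝ) := by
    have : 0 < (r' + 1) * n := by positivity
    exact_mod_cast this
  have hp1 : p ≤ 1 := by
    rw [hp, div_le_one (by positivity)]
    have : (s : ℝ) ≤ (((r' + 1) * n : ℕ) : ℝ) := by exact_mod_cast hsD
    gcongr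
  have hpow : (1 - p) ^ t ≤ Real.exp (-(p * t)) := by
    calc (1 - p) ^ t ≤ (Real.exp (-p)) ^ t := by
          apply pow_le_pow_left₀
          · linarith
          · exact Real.one_sub_le_exp_neg p
      _ = Real.exp (-(p * t)) := by
          rw [← Real.exp_nat_mul]; congr 1; ring
  have hkexp : (k : ℝ) ≤ Real.exp (Real.log n / ((r' : ℝ) + 1)) := by
    rw [← Real.log_le_iff_le_exp hkpos, le_div_iff₀ (by positivity)]
    have := Real.log_le_log (by positivity) hkr
    rw [Real.log_pow] at this
    push_cast at this
    linarith
  have : (k : ℝ) * (1 - p) ^ t ≤ Real.exp (-(Real.log n / (2 * ((r' : ℝ) + 1)))) := by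
    calc (k : ℝ) * (1 - p) ^ t
        ≤ Real.exp (Real.log n / ((r' : ℝ) + 1)) *
          Real.exp (-(3 / 2 * Real.log n / ((r' : ℝ) + 1))) := by
          apply mul_le_mul hkexp _ (pow_nonneg (by linarith) _) (Real.exp_pos _).le
          refine hpow.trans ?_
          apply Real.exp_le_exp.2
          linarith
      _ = _ := by
          rw [← Real.exp_add]
          congr 1
          field_simp
          ring
  linarith

/-- **Proposition.** If `|H_n| ≤ (1/(2r))·(n/log n)^(1/r)`, then a.a.s. `RM_n^(r)` contains
a copy of `H_n`. -/
theorem aas_contains_growing_copy (r : ℕ) (hr : 2 ≤ r)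
    (H : ℕ → Finset (Finset ℕ)) (k : ℕ → ℕ)
    (hH : ∀ n, IsOrderedMatching r (k n) (H n))
    (hsize : ∀ n, (k n : ℝ) ≤
      (1 / (2 * (r : ℝ))) * ((n : ℝ) / Real.log n) ^ ((1 : ℝ) / (r : ℝ))) :
    Filter.Tendsto (fun n : ℕ => prob r n (ContainsCopy r (k n) (H n)))
      Filter.atTop (nhds 1) := by
  obtain ⟨r', rfl⟩ : ∃ r', r = r' + 1 := ⟨r - 1, by omega⟩
  have hr' : 1 ≤ r' := by omega
  have hlim : Filter.Tendsto (fun n : ℕ =>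
      1 - Real.exp (-(Real.log n / (2 * ((r' : ℝ) + 1))))) Filter.atTop (nhds 1) := by
    have h1 : Filter.Tendsto (fun n : ℕ => Real.log n / (2 * ((r' : ℝ) + 1)))
        Filter.atTop Filter.atTop :=
      (Real.tendsto_log_atTop.comp tendsto_natCast_atTop_atTop).atTop_div_const (by positivity)
    have h2 := (Real.tendsto_exp_neg_atTop_nhds_zero.comp h1).const_sub 1
    simpa using h2
  refine tendsto_of_tendsto_of_tendsto_of_le_of_le' hlim tendsto_const_nhds ?_
    (Filter.Eventually.of_forall (fun n => prob_le_one _ _ _))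
  have hev : ∀ᶠ n : ℕ in Filter.atTop,
      (4 * ((r' : ℝ) + 1) * (1 + ((r' : ℝ) + 1) ^ 2)) ^ 2 ≤ (n : ℝ) :=
    tendsto_natCast_atTop_atTop.eventually_ge_atTop _
  filter_upwards [hev, Filter.eventually_ge_atTop 3] with n hbig hn
  refine final_bound r' n (k n) (H n) hr' hn (hH n) ?_ hbig
  have hs := hsize n
  push_cast at hs
  have h1n : (1 : ℝ) < n := by
    have : 1 < n := by omega
    exact_mod_cast this
  have hlogpos : 0 < Real.log n := Real.log_pos h1n
  have hq : (0 : ℝ) ≤ (n : ℝ) / Real.log n := by positivity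
  have h2 : 2 * ((r' : ℝ) + 1) * (k n) ≤ ((n : ℝ) / Real.log n) ^ ((1 : ℝ) / ((r' : ℝ) + 1)) := by
    rw [div_mul_eq_mul_div, one_mul, le_div_iff₀ (by positivity)] at hs
    linarith
  have h3 : (2 * ((r' : ℝ) + 1) * (k n)) ^ (r' + 1) ≤ (n : ℝ) / Real.log n := by
    refine (pow_le_pow_left₀ (by positivity) h2 (r' + 1)).trans (le_of_eq ?_)
    rw [← Real.rpow_natCast, ← Real.rpow_mul hq]
    push_cast
    rw [one_div, inv_mul_cancel₀ (by positivity), Real.rpow_one]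
  rw [le_div_iff₀ hlogpos] at h3
  linarith
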